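/- If a shift space X ⊆ 𝒜^∞ has the d̄-shadowing property, then X is d̄_M-stable. -/

import Mathlib

open MeasureTheory Filter Topology

namespace DbarPaper

variable {A : Type} [Fintype A] [DecidableEq A] [Inhabited A]
  [TopologicalSpace A] [DiscreteTopology A]
  [MeasurableSpace A] [MeasurableSingletonClass A]

/-- The shift map on the full shift `𝒜^∞ = ℕ → A`. -/
def shift : (ℕ → A) → (ℕ → A) := fun x n => x (n + 1)

/-- A shift space: a nonempty, closed, shift-invariant subset of the full shift. -/
def ShiftSpace (X : Set (ℕ → A)) : Prop :=
  X.Nonempty ∧ IsClosed X ∧ ∀ x ∈ X, shift x ∈ X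

/-- The word `w` appears in the sequence `x`. -/
def occursIn (w : List A) (x : ℕ → A) : Prop :=
  ∃ i : ℕ, w = List.ofFn (fun k : Fin w.length => x (i + (k : ℕ)))

/-- The language of a set `X`: all finite words appearing in points of `X`. -/
def lang (X : Set (ℕ → A)) : Set (List A) := {w | ∃ x ∈ X, occursIn w x}

/-- Words of length `n` in the language of `X`. -/
def langN (n : ℕ) (X : Set (ℕ → A)) : Set (List A) := {w | w ∈ lang X ∧ w.length = n}

/-- The pseudometric `d̄` on the full shift. -/
noncomputable def dbar (x y : ℕ → A) : ℝ :=
  Filter.limsup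
    (fun n => (((Finset.range n).filter (fun j => x j ≠ y j)).card : ℝ) / (n : ℝ))
    Filter.atTop

/-- Hausdorff "distance" between two sets induced by a `ℝ`-valued distance. -/
noncomputable def hausdist {Z : Type*} (d : Z → Z → ℝ) (P Q : Set Z) : ℝ :=
  max (⨆ p : P, ⨅ q : Q, d p q) (⨆ q : Q, ⨅ p : P, d p q)

/-- A probability measure is shift-invariant. -/
def invariantPM (μ : ProbabilityMeasure (ℕ → A)) : Prop :=
  (μ : Measure (ℕ → A)).map shift = (μ : Measure (ℕ → A))

/-- `M_σ(X)`: shift-invariant Borel probability measures giving `X` full measure. -/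
def Msigma (X : Set (ℕ → A)) : Set (ProbabilityMeasure (ℕ → A)) :=
  {μ | invariantPM μ ∧ μ X = 1}

/-- `ξ` is a joining of `μ` and `ν`: a `σ×σ`-invariant measure on the product with
marginals `μ` and `ν`. -/
def IsJoining (ξ : Measure ((ℕ → A) × (ℕ → A))) (μ ν : ProbabilityMeasure (ℕ → A)) : Prop :=
  ξ.map (Prod.map shift shift) = ξ ∧
  ξ.map Prod.fst = (μ : Measure (ℕ → A)) ∧ ξ.map Prod.snd = (ν : Measure (ℕ → A))

/-- Ornstein's metric `d̄_M` on invariant measures. -/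
noncomputable def dbarM (μ ν : ProbabilityMeasure (ℕ → A)) : ℝ :=
  sInf {r : ℝ | ∃ ξ : Measure ((ℕ → A) × (ℕ → A)),
    IsJoining ξ μ ν ∧ r = (ξ {p | p.1 0 ≠ p.2 0}).toReal}

/-- `d̄_M`-stability of a shift space (Austin). -/
def DbarMStable (X : Set (ℕ → A)) : Prop :=
  ∀ ε : ℝ, 0 < ε → ∃ U : Set (ProbabilityMeasure (ℕ → A)), IsOpen U ∧ Msigma X ⊆ U ∧
    ∀ ν ∈ U, invariantPM ν → ∃ μ ∈ Msigma X, dbarM μ ν < ε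

/-- The infinite concatenation of a sequence of (nonempty) words. -/
def concatSeq (w : ℕ → List A) : ℕ → A := fun n =>
  ((List.ofFn (fun i : Fin (n + 1) => w (i : ℕ))).flatten).getD n default

/-- The `d̄`-shadowing property. -/
def DbarShadowing (X : Set (ℕ → A)) : Prop :=
  ∀ ε : ℝ, 0 < ε → ∃ N : ℕ, 0 < N ∧ ∀ w : ℕ → List A,
    (∀ j, w j ∈ lang X) → (∀ j, N ≤ (w j).length) →
    ∃ x' ∈ X, dbar (concatSeq w) x' < ε

/-- `U_n(X)`: the union of cylinders of words of length `n` in the language of `X`. -/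
def cylNbhd (X : Set (ℕ → A)) (n : ℕ) : Set (ℕ → A) :=
  {x | List.ofFn (fun k : Fin n => x (k : ℕ)) ∈ lang X}

/-- The `n`-th (topological) Markov approximation of `X`: all sequences whose subwords of
length `n+1` belong to the language of `X`. -/
def markovApprox (X : Set (ℕ → A)) (n : ℕ) : Set (ℕ → A) :=
  {x | ∀ i : ℕ, List.ofFn (fun k : Fin (n + 1) => x (i + (k : ℕ))) ∈ lang X}

/-- Transitivity, in terms of the language. -/
def TransitiveShift (X : Set (ℕ → A)) : Prop :=
  ∀ u ∈ lang X, ∀ w ∈ lang X, ∃ v : List A, u ++ v ++ w ∈ lang X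

/-- Topological mixing, in terms of the language. -/
def MixingShift (X : Set (ℕ → A)) : Prop :=
  ∀ u ∈ lang X, ∀ w ∈ lang X, ∃ N : ℕ, ∀ m : ℕ, N ≤ m →
    ∃ v : List A, v.length = m ∧ u ++ v ++ w ∈ lang X

/-- Chain mixing: all but finitely many Markov approximations are topologically mixing. -/
def ChainMixing (X : Set (ℕ → A)) : Prop :=
  ∃ N : ℕ, ∀ n : ℕ, N ≤ n → MixingShift (markovApprox X n)

/-- `C` is the measure center of `X`: the smallest shift space contained in `X` of full
measure for every invariant measure of `X`. -/
def IsMeasureCenter (X C : Set (ℕ → A)) : Prop :=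
  ShiftSpace C ∧ C ⊆ X ∧ (∀ μ ∈ Msigma X, μ C = 1) ∧
  ∀ Y : Set (ℕ → A), ShiftSpace Y → Y ⊆ X → (∀ μ ∈ Msigma X, μ Y = 1) → C ⊆ Y

/-- Measure of the cylinder determined by a word of length `n`. -/
noncomputable def cylMeasure (μ : ProbabilityMeasure (ℕ → A)) {n : ℕ} (w : Fin n → A) : ℝ :=
  ((μ : Measure (ℕ → A)) {x | ∀ k : Fin n, x (k : ℕ) = w k}).toReal

/-- Entropy of the partition into cylinders of length `n`. -/
noncomputable def blockEntropy (μ : ProbabilityMeasure (ℕ → A)) (n : ℕ) : ℝ :=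
  -∑ w : Fin n → A, cylMeasure μ w * Real.log (cylMeasure μ w)

/-- Kolmogorov–Sinai entropy of a shift-invariant measure. -/
noncomputable def ksEntropy (μ : ProbabilityMeasure (ℕ → A)) : ℝ :=
  Filter.limsup (fun n => blockEntropy μ n / (n : ℝ)) Filter.atTop

/-- `μ` is ergodic for the shift. -/
def ErgodicPM (μ : ProbabilityMeasure (ℕ → A)) : Prop :=
  Ergodic shift (μ : Measure (ℕ → A))

/-- Ergodic measures are entropy dense in `M_σ(X)`. -/
def EntropyDense (X : Set (ℕ → A)) : Prop :=
  ∀ μ ∈ Msigma X, ∀ U : Set (ProbabilityMeasure (ℕ → A)), IsOpen U → μ ∈ U →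
    ∀ ε : ℝ, 0 < ε →
      ∃ ν ∈ Msigma X, ν ∈ U ∧ ErgodicPM ν ∧ |ksEntropy ν - ksEntropy μ| < ε

/-- Topological entropy of a shift space. -/
noncomputable def topEntropy (X : Set (ℕ → A)) : ℝ :=
  Filter.limsup (fun n => Real.log (Nat.card ↥(langN n X)) / (n : ℝ)) Filter.atTop

/-- The standard metric on the full shift. -/
noncomputable def rho (x y : ℕ → A) : ℝ :=
  open scoped Classical in
  if x = y then 0 else (2 : ℝ) ^ (-((sInf {j : ℕ | x j ≠ y j} : ℕ) : ℤ))

/-- Proximality of a shift space. -/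
def ProximalShift (X : Set (ℕ → A)) : Prop :=
  ∀ x ∈ X, ∀ y ∈ X,
    Filter.liminf (fun n => rho (shift^[n] x) (shift^[n] y)) Filter.atTop = 0

/-- Minimality of a shift space. -/
def MinimalShift (X : Set (ℕ → A)) : Prop :=
  ShiftSpace X ∧ ∀ Y : Set (ℕ → A), ShiftSpace Y → Y ⊆ X → Y = X

/-- An `A`-labeled directed multigraph on vertices `V` with edges `E`. -/
structure LabeledGraph (A V E : Type*) where
  src : E → V
  dst : E → V
  lab : E → A

namespace LabeledGraph

variable {A' V E : Type*}

/-- `es` is a path in `G` from `u` to `v`. -/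
def PathFromTo (G : LabeledGraph A' V E) (es : List E) (u v : V) : Prop :=
  es.Chain' (fun e f => G.dst e = G.src f) ∧
  es.head?.map G.src = some u ∧ es.getLast?.map G.dst = some v

/-- `G` is strongly connected. -/
def StronglyConnected (G : LabeledGraph A' V E) : Prop :=
  ∀ u v : V, ∃ es : List E, G.PathFromTo es u v

/-- `d` is the period of `G`: the gcd of lengths of closed paths. -/
def HasPeriod (G : LabeledGraph A' V E) (d : ℕ) : Prop :=
  (∀ (es : List E) (u : V), G.PathFromTo es u u → d ∣ es.length) ∧
  ∀ d' : ℕ, (∀ (es : List E) (u : V), G.PathFromTo es u u → d' ∣ es.length) → d' ∣ d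

/-- `b` is a safe symbol for `G`. -/
def SafeSymbol (G : LabeledGraph A' V E) (b : A') : Prop :=
  ∀ e : E, ∃ e' : E, G.src e' = G.src e ∧ G.dst e' = G.dst e ∧ G.lab e' = b

/-- The shift space presented by the labeled graph `G`: labels read along infinite paths. -/
def presents (G : LabeledGraph A' V E) : Set (ℕ → A') :=
  {x | ∃ e : ℕ → E, (∀ j, G.dst (e j) = G.src (e (j + 1))) ∧ ∀ j, x j = G.lab (e j)}

end LabeledGraph

/-- The coupling of a family of labeled graphs: an edge labeled `a` from `v` to `v'` exists
iff each `G k` has an edge from `v k` to `v' k` labeled `a`. -/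
def coupling {A' : Type*} {n : ℕ} {V E : Fin n → Type*}
    (G : ∀ k, LabeledGraph A' (V k) (E k)) :
    LabeledGraph A' (∀ k, V k) {p : (∀ k, E k) × A' // ∀ k, (G k).lab (p.1 k) = p.2} where
  src p := fun k => (G k).src (p.1.1 k)
  dst p := fun k => (G k).dst (p.1.1 k)
  lab p := p.1.2

/-- Sofic shift spaces: those presented by some finite labeled graph. -/
def Sofic (X : Set (ℕ → A)) : Prop :=
  ∃ (V E : Type) (_ : Fintype V) (_ : Fintype E) (G : LabeledGraph A V E),
    X = G.presents

/-- The coded shift generated by a finite set of words `B`: the closure of the set of all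
shifts of infinite concatenations of words from `B`. -/
def codedShift (B : Finset (List A)) : Set (ℕ → A) :=
  closure {x | ∃ (b : ℕ → List A) (k : ℕ), (∀ i, b i ∈ B) ∧ x = shift^[k] (concatSeq b)}

/-!
Fix `ε` and a block length `N` provided by shadowing, and let `ν` be an invariant measure giving
little mass to the sequences whose first `N` symbols do not form a word of `X`. Cut a `ν`-random
sequence into `N`-blocks and replace the few forbidden blocks by words of `X`; shadowing, applied to
the periodic repetition of the first `k` blocks, yields a point of `X` that agrees with the random
sequence at most of the first `k * N` coordinates. This point can be chosen as a function of those
coordinates only, hence measurably, and so defines a coupling of a measure on `X` with `ν`.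
Averaging the coupling over `k * N` shifts and letting `k → ∞` gives, as in the Krylov–Bogolyubov
theorem, a joining of an invariant measure on `X` with `ν`; its cost is bounded by the mismatch
frequency.
-/

open Set Function
open scoped ENNReal

section OrbitAverage

variable {Ω Ω' : Type*} [MeasurableSpace Ω] [MeasurableSpace Ω']

/-- The average of the push-forwards of `η` under the first `n` iterates of `T` (the zero measure
for `n = 0`). -/
noncomputable def orbitAverage (T : Ω → Ω) (n : ℕ) (η : Measure Ω) : Measure Ω :=
  (n : ℝ≥0∞)⁻¹ • ∑ j ∈ Finset.range n, η.map T^[j]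

lemma orbitAverage_apply {T : Ω → Ω} (hT : Measurable T) (n : ℕ) (η : Measure Ω) {s : Set Ω}
    (hs : MeasurableSet s) :
    orbitAverage T n η s = (n : ℝ≥0∞)⁻¹ * ∑ j ∈ Finset.range n, η (T^[j] ⁻¹' s) := by
  simp only [orbitAverage, Measure.smul_apply, Measure.finsetSum_apply, smul_eq_mul,
    Measure.map_apply (hT.iterate _) hs]

lemma map_orbitAverage {T : Ω → Ω} {S : Ω' → Ω'} {π : Ω → Ω'} (hT : Measurable T)
    (hS : Measurable S) (hπ : Measurable π) (h : Semiconj π T S) (n : ℕ) (η : Measure Ω) :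
    (orbitAverage T n η).map π = orbitAverage S n (η.map π) := by
  ext s hs
  rw [Measure.map_apply hπ hs, orbitAverage_apply hT n η (hπ hs), orbitAverage_apply hS n _ hs]
  congr! 2 with j
  rw [Measure.map_apply hπ (hS.iterate j hs), ← preimage_comp, ← preimage_comp,
    (h.iterate_right j).comp_eq]

lemma orbitAverage_eq_self {T : Ω → Ω} {μ : Measure Ω} (hT : MeasurePreserving T μ μ) {n : ℕ}
    (hn : n ≠ 0) : orbitAverage T n μ = μ := by
  simp only [orbitAverage, (hT.iterate _).map_eq, Finset.sum_const, Finset.card_range,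
    ← Nat.cast_smul_eq_nsmul ℝ≥0∞, smul_smul]
  rw [ENNReal.inv_mul_cancel (by exact_mod_cast hn) (ENNReal.natCast_ne_top n), one_smul]

lemma orbitAverage_compl_eq_zero {T : Ω → Ω} (hT : Measurable T) {s : Set Ω}
    (hs : MeasurableSet s) (hTs : MapsTo T s s) (n : ℕ) {η : Measure Ω} (hη : η sᶜ = 0) :
    orbitAverage T n η sᶜ = 0 := by
  rw [orbitAverage_apply hT n η hs.compl, Finset.sum_eq_zero, mul_zero]
  exact fun j _ => measure_mono_null (compl_subset_compl.2 (hTs.iterate j)) hη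

lemma isProbabilityMeasure_orbitAverage {T : Ω → Ω} (hT : Measurable T) {n : ℕ} (hn : n ≠ 0)
    (η : Measure Ω) [IsProbabilityMeasure η] : IsProbabilityMeasure (orbitAverage T n η) := by
  refine ⟨?_⟩
  rw [orbitAverage_apply hT n η .univ]
  simpa using ENNReal.inv_mul_cancel (by exact_mod_cast hn) (ENNReal.natCast_ne_top n)

lemma iterate_measure_map {T : Ω → Ω} (hT : Measurable T) (n : ℕ) (η : Measure Ω) :
    (Measure.map T)^[n] η = η.map T^[n] := by
  induction n with
  | zero => simp
  | succ n ih => rw [iterate_succ_apply', ih, Measure.map_map hT (hT.iterate n), iterate_succ']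

variable [TopologicalSpace Ω]

lemma continuous_measure_of_isClopen [OpensMeasurableSpace Ω] [HasOuterApproxClosed Ω] {s : Set Ω}
    (hs : IsClopen s) : Continuous fun μ : ProbabilityMeasure Ω => (μ : Measure Ω) s :=
  continuous_iff_continuousAt.2 fun μ =>
    ProbabilityMeasure.tendsto_measure_of_null_frontier_of_tendsto' tendsto_id
      (by simp [hs.frontier_eq])

lemma isClosed_setOf_measure_le [OpensMeasurableSpace Ω] [HasOuterApproxClosed Ω] {G : Set Ω}
    (hG : IsOpen G) (c : ℝ≥0∞) :
    IsClosed {μ : ProbabilityMeasure Ω | (μ : Measure Ω) G ≤ c} := by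
  refine isClosed_iff_forall_filter.2 fun μ F _ hF hμ => ?_
  refine (ProbabilityMeasure.le_liminf_measure_open_of_tendsto (tendsto_id'.2 hμ) hG).trans ?_
  exact liminf_le_of_frequently_le' (Eventually.frequently (hF (mem_principal_self _)))

lemma integral_orbitAverage [OpensMeasurableSpace Ω] {T : Ω → Ω} (hT : Measurable T) (n : ℕ)
    (η : Measure Ω) [IsFiniteMeasure η] (f : BoundedContinuousFunction Ω ℝ) :
    ∫ x, f x ∂orbitAverage T n η =
      birkhoffAverage ℝ (Measure.map T) (fun ρ => ∫ x, f x ∂ρ) n η := by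
  rw [orbitAverage, integral_smul_measure, integral_finsetSum_measure fun j _ => f.integrable _]
  simp [birkhoffAverage, birkhoffSum, iterate_measure_map hT]

lemma dist_integral_map_orbitAverage_le [OpensMeasurableSpace Ω] {T : Ω → Ω} (hT : Measurable T)
    (n : ℕ) (η : Measure Ω) [IsProbabilityMeasure η] (f : BoundedContinuousFunction Ω ℝ) :
    dist (∫ x, f x ∂(orbitAverage T n η).map T) (∫ x, f x ∂orbitAverage T n η) ≤
      2 * ‖f‖ / n := by
  have hnorm : ∀ j, ‖∫ x, f x ∂(Measure.map T)^[j] η‖ ≤ ‖f‖ := fun j => by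
    rw [iterate_measure_map hT]
    have := Measure.isProbabilityMeasure_map (μ := η) (hT.iterate j).aemeasurable
    simpa using f.norm_integral_le_norm (η.map T^[j])
  have := Measure.isProbabilityMeasure_map (μ := η) hT.aemeasurable
  rw [map_orbitAverage hT hT hT (Function.Commute.refl T), integral_orbitAverage hT,
    integral_orbitAverage hT, dist_birkhoffAverage_apply_birkhoffAverage]
  gcongr
  refine (dist_le_norm_add_norm _ _).trans ?_
  linarith [hnorm n, show ‖∫ x, f x ∂η‖ ≤ ‖f‖ from hnorm 0]

/-- A form of the **Krylov–Bogolyubov theorem**. -/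
lemma exists_map_eq_self_of_isClosed [BorelSpace Ω] [T2Space Ω] [CompactSpace Ω]
    [HasOuterApproxClosed Ω] {T : Ω → Ω} (hT : Continuous T) {C : Set (ProbabilityMeasure Ω)}
    (hC : IsClosed C) (h : ∀ k : ℕ, ∃ n ≥ k, ∃ η : ProbabilityMeasure Ω, ∃ ξ ∈ C,
      (ξ : Measure Ω) = orbitAverage T n η) :
    ∃ ξ ∈ C, (ξ : Measure Ω).map T = ξ := by
  choose n hn η ξs hξC hξs using h
  obtain ⟨ξ, hξ, hlim⟩ := hC.isCompact.ultrafilter_le_nhds' ((hyperfilter ℕ).map ξs)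
    (mem_map.2 (univ_mem' hξC))
  replace hlim : Tendsto ξs (hyperfilter ℕ) (𝓝 ξ) := hlim
  have hn_top : Tendsto n (hyperfilter ℕ) atTop :=
    (tendsto_atTop_mono hn tendsto_id).mono_left Nat.hyperfilter_le_atTop
  have := Measure.isProbabilityMeasure_map (μ := (ξ : Measure Ω)) hT.measurable.aemeasurable
  refine ⟨ξ, hξ, ext_of_forall_integral_eq_of_IsFiniteMeasure fun f => ?_⟩
  have hf := ProbabilityMeasure.tendsto_iff_forall_integral_tendsto.1 hlim f
  have hfT := ProbabilityMeasure.tendsto_iff_forall_integral_tendsto.1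
    (ProbabilityMeasure.tendsto_map_of_tendsto_of_continuous _ _ hlim hT) f
  simp only [ProbabilityMeasure.toMeasure_map _ hT.measurable.aemeasurable] at hfT
  have hdist : Tendsto (fun k => dist (∫ x, f x ∂(ξs k : Measure Ω).map T)
      (∫ x, f x ∂(ξs k : Measure Ω))) (hyperfilter ℕ) (𝓝 0) := by
    refine squeeze_zero (fun _ => dist_nonneg) (fun k => ?_)
      ((tendsto_natCast_atTop_atTop.comp hn_top).const_div_atTop (2 * ‖f‖))
    rw [hξs k]
    exact dist_integral_map_orbitAverage_le hT.measurable (n k) (η k) f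
  exact dist_eq_zero.1 (tendsto_nhds_unique (hfT.dist hf) hdist)

end OrbitAverage

lemma lintegral_count {Ω : Type*} [MeasurableSpace Ω] (μ : Measure Ω) (p : ℕ → Ω → Prop)
    [∀ x, DecidablePred (p · x)] (hp : ∀ j, MeasurableSet {x | p j x}) (n : ℕ) :
    ∫⁻ x, (Nat.count (p · x) n : ℝ≥0∞) ∂μ = ∑ j ∈ Finset.range n, μ {x | p j x} := by
  have hcount : ∀ x, (Nat.count (p · x) n : ℝ≥0∞) =
      ∑ j ∈ Finset.range n, {x | p j x}.indicator 1 x := fun x => by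
    simp [Nat.count_eq_card_filter_range, indicator_apply]
  simp_rw [hcount]
  rw [lintegral_finsetSum _ fun j _ => measurable_one.indicator (hp j)]
  simp_rw [lintegral_indicator_one (hp _)]

lemma measurable_of_dependsOn {ι α β : Type*} [MeasurableSpace α] [DiscreteMeasurableSpace α]
    [Countable α] [MeasurableSpace β] {f : (ι → α) → β} {s : Set ι} [Finite s]
    (hf : DependsOn f s) : Measurable f := by
  rcases isEmpty_or_nonempty β with hβ | hβ
  · have := f.isEmpty
    exact measurable_of_empty f
  · obtain ⟨g, rfl⟩ := dependsOn_iff_exists_comp.1 hf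
    exact (Measurable.of_discrete (f := g)).comp s.measurable_restrict

/-- Hilbert's `ε` operator makes the choice depend on the predicate only. -/
lemma exists_dependsOn_forall {ι α β : Type*} [Nonempty β] {P : (ι → α) → β → Prop} {s : Set ι}
    (hP : DependsOn P s) (h : ∀ x, ∃ z, P x z) :
    ∃ g : (ι → α) → β, DependsOn g s ∧ ∀ x, P x (g x) :=
  ⟨fun x => Classical.epsilon (P x), fun x y hxy => by simp only [hP hxy],
    fun x => Classical.epsilon_spec (h x)⟩

section Shift

variable {α : Type}

lemma shift_iterate_apply (m : ℕ) (x : ℕ → α) (n : ℕ) : shift^[m] x n = x (m + n) := by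
  induction m generalizing n with
  | zero => simp
  | succ m ih => rw [iterate_succ_apply', shift, ih]; congr 1; omega

lemma measurable_shift [MeasurableSpace α] : Measurable (shift : (ℕ → α) → ℕ → α) :=
  measurable_pi_lambda _ fun n => measurable_pi_apply (n + 1)

lemma continuous_shift [TopologicalSpace α] : Continuous (shift : (ℕ → α) → ℕ → α) :=
  continuous_pi fun n => continuous_apply (n + 1)

lemma mem_cylNbhd_congr {X : Set (ℕ → α)} {N : ℕ} {x y : ℕ → α} (h : ∀ j < N, x j = y j) :
    x ∈ cylNbhd X N ↔ y ∈ cylNbhd X N := by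
  have : (fun k : Fin N => x k) = fun k : Fin N => y k := funext fun k => h k k.2
  simp only [cylNbhd, mem_ofPred_eq, this]

lemma subset_cylNbhd (X : Set (ℕ → α)) (N : ℕ) : X ⊆ cylNbhd X N :=
  fun x hx => ⟨x, hx, 0, by apply List.ext_get <;> simp⟩

lemma isClopen_cylNbhd [TopologicalSpace α] [DiscreteTopology α] (X : Set (ℕ → α)) (N : ℕ) :
    IsClopen (cylNbhd X N) :=
  (isClopen_discrete {u : Fin N → α | List.ofFn u ∈ lang X}).preimage
    (f := fun (x : ℕ → α) (k : Fin N) => x k) (by fun_prop)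

lemma isClopen_setOf_ne_zero [TopologicalSpace α] [DiscreteTopology α] :
    IsClopen {p : (ℕ → α) × (ℕ → α) | p.1 0 ≠ p.2 0} :=
  (isClopen_discrete {q : α × α | q.1 ≠ q.2}).preimage
    (f := fun p : (ℕ → α) × (ℕ → α) => (p.1 0, p.2 0)) (by fun_prop)

/-- The concatenation of the words formed by the first `N` symbols of `b 0`, `b 1`, `b 2`, …;
in contrast to `concatSeq`, all words have the same length. -/
def concatBlocks (N : ℕ) (b : ℕ → ℕ → α) : ℕ → α := fun n => b (n / N) (n % N)

lemma shift_iterate_concatBlocks_apply {N : ℕ} (b : ℕ → ℕ → α) (i : ℕ) {j : ℕ} (hj : j < N) :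
    shift^[i * N] (concatBlocks N b) j = b i j := by
  rw [shift_iterate_apply, concatBlocks, mul_comm, Nat.mul_add_div (by omega), Nat.mul_add_mod,
    Nat.div_eq_of_lt hj, Nat.mod_eq_of_lt hj, add_zero]

lemma concatSeq_ofFn [Inhabited α] {N : ℕ} (hN : 0 < N) (b : ℕ → ℕ → α) :
    concatSeq (fun i => List.ofFn fun k : Fin N => b i k) = concatBlocks N b := by
  funext n
  have hblock : ∀ i, (List.ofFn fun k : Fin N => b i k) =
      List.ofFn fun k : Fin N => concatBlocks N b (i * N + k) := fun i => by
    congr! 2 with k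
    rw [← shift_iterate_concatBlocks_apply b i k.2, shift_iterate_apply]
  have hn : n < (n + 1) * N := by nlinarith
  have hflat := List.ofFn_mul (m := n + 1) (n := N) fun j => concatBlocks N b j
  simp only at hflat
  simp_rw [concatSeq, hblock]
  rw [← hflat, List.getD_eq_getElem _ _ (by simpa using hn)]
  simp

end Shift

section MismatchCount

variable {α : Type} [DecidableEq α]

/-- The number of indices `j < n` at which `x` and `y` differ; `dbar x y` is the upper limit of
`mismatchCount x y n / n`. -/
def mismatchCount (x y : ℕ → α) (n : ℕ) : ℕ := Nat.count (fun j => x j ≠ y j) n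

lemma mismatchCount_congr {x x' y y' : ℕ → α} {n : ℕ} (hx : ∀ j < n, x j = x' j)
    (hy : ∀ j < n, y j = y' j) : mismatchCount x y n = mismatchCount x' y' n := by
  simp only [mismatchCount, Nat.count_eq_card_filter_range]
  congr 1
  exact Finset.filter_congr fun j hj => by
    rw [hx j (Finset.mem_range.1 hj), hy j (Finset.mem_range.1 hj)]

lemma mismatchCount_comm (x y : ℕ → α) (n : ℕ) : mismatchCount x y n = mismatchCount y x n := by
  simp only [mismatchCount, ne_comm]

lemma mismatchCount_triangle (x y z : ℕ → α) (n : ℕ) :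
    mismatchCount x z n ≤ mismatchCount x y n + mismatchCount y z n := by
  induction n with
  | zero => simp [mismatchCount]
  | succ n ih =>
    simp only [mismatchCount, Nat.count_succ] at ih ⊢
    grind

lemma mismatchCount_mul (x y : ℕ → α) (k N : ℕ) :
    mismatchCount x y (k * N) =
      ∑ i ∈ Finset.range k, mismatchCount (shift^[i * N] x) (shift^[i * N] y) N := by
  induction k with
  | zero => simp [mismatchCount]
  | succ k ih =>
    rw [Finset.sum_range_succ, ← ih, Nat.succ_mul]
    simp only [mismatchCount, Nat.count_add, shift_iterate_apply]

lemma exists_window_mismatchCount_le {x y : ℕ → α} {ε : ℝ} (h : dbar x y < ε) {L : ℕ}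
    (hL : 0 < L) :
    ∃ m : ℕ, (mismatchCount (shift^[m * L] x) (shift^[m * L] y) L : ℝ) ≤ ε * L := by
  have hbdd : IsBoundedUnder (· ≤ ·) atTop fun n : ℕ =>
      (((Finset.range n).filter fun j => x j ≠ y j).card : ℝ) / n :=
    isBoundedUnder_of ⟨1, fun n => div_le_one_of_le₀
      (mod_cast (Finset.card_filter_le _ _).trans (Finset.card_range n).le) n.cast_nonneg⟩
  obtain ⟨n, hn⟩ := eventually_atTop.1 (eventually_lt_of_limsup_lt h hbdd)
  have hlt : (mismatchCount x y ((n + 1) * L) : ℝ) < ε * ((n + 1) * L : ℕ) := by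
    rw [mismatchCount, Nat.count_eq_card_filter_range, ← div_lt_iff₀ (by positivity)]
    exact hn _ (by nlinarith)
  by_contra! hcon
  refine hlt.not_ge ?_
  rw [mismatchCount_mul]
  push_cast
  calc ε * ((n + 1) * L) = ∑ _i ∈ Finset.range (n + 1), ε * L := by simp; ring
    _ ≤ _ := Finset.sum_le_sum fun m _ => (hcon m).le

end MismatchCount

section ForbiddenBlocks

variable {α : Type} {X : Set (ℕ → α)}

open scoped Classical in
/-- The number of the first `k` consecutive blocks of length `N` of `x` that are not words
of `X`. -/
noncomputable def forbiddenBlockCount (X : Set (ℕ → α)) (N k : ℕ) (x : ℕ → α) : ℕ :=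
  Nat.count (fun i => shift^[i * N] x ∈ (cylNbhd X N)ᶜ) k

lemma forbiddenBlockCount_congr {N k : ℕ} {x y : ℕ → α} (h : ∀ j < k * N, x j = y j) :
    forbiddenBlockCount X N k x = forbiddenBlockCount X N k y := by
  classical
  simp only [forbiddenBlockCount, Nat.count_eq_card_filter_range]
  congr 1
  refine Finset.filter_congr fun i hi => not_congr (mem_cylNbhd_congr fun j hj => ?_)
  rw [shift_iterate_apply, shift_iterate_apply]
  have := Nat.mul_le_mul_right N (Finset.mem_range.1 hi)
  exact h _ (by rw [Nat.succ_mul] at this; omega)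

lemma exists_concatBlocks_mismatchCount_le [DecidableEq α] (hX : X.Nonempty) (N : ℕ)
    (x : ℕ → α) :
    ∃ b : ℕ → ℕ → α, (∀ i, b i ∈ cylNbhd X N) ∧
      ∀ k, mismatchCount (concatBlocks N b) x (k * N) ≤ N * forbiddenBlockCount X N k x := by
  classical
  obtain ⟨x₀, hx₀⟩ := hX
  set b : ℕ → ℕ → α := fun i => if shift^[i * N] x ∈ cylNbhd X N then shift^[i * N] x else x₀
  refine ⟨b, fun i => ?_, fun k => ?_⟩
  · by_cases hi : shift^[i * N] x ∈ cylNbhd X N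
    · simp [b, hi]
    · simpa only [b, hi, if_false] using subset_cylNbhd X N hx₀
  · rw [mismatchCount_mul, forbiddenBlockCount, Nat.count_eq_card_filter_range,
      Finset.card_filter, Finset.mul_sum]
    refine Finset.sum_le_sum fun i _ => ?_
    rw [mismatchCount_congr (fun j hj => shift_iterate_concatBlocks_apply b i hj) fun _ _ => rfl]
    by_cases hi : shift^[i * N] x ∈ cylNbhd X N
    · simp [b, hi, mismatchCount]
    · rw [if_pos (mem_compl hi), mul_one]
      exact Nat.count_le _

end ForbiddenBlocks

section Shadowing

variable {α : Type} [DecidableEq α] [Inhabited α] {X : Set (ℕ → α)} {ε : ℝ} {N : ℕ}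

/-- The condition that the length `N` witnesses the `d̄`-shadowing property of `X` for `ε`. -/
def ShadowsBlocks (X : Set (ℕ → α)) (ε : ℝ) (N : ℕ) : Prop :=
  ∀ w : ℕ → List α, (∀ j, w j ∈ lang X) → (∀ j, N ≤ (w j).length) →
    ∃ x ∈ X, dbar (concatSeq w) x < ε

lemma ShadowsBlocks.exists_dbar_concatBlocks_lt (h : ShadowsBlocks X ε N) (hN : 0 < N)
    {b : ℕ → ℕ → α} (hb : ∀ i, b i ∈ cylNbhd X N) : ∃ x ∈ X, dbar (concatBlocks N b) x < ε :=
  concatSeq_ofFn hN b ▸ h _ hb fun _ => by simp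

/-- Shadow the `k`-periodic repetition of `b 0, …, b (k - 1)`: some period is shadowed at least as
well as the average one. -/
lemma ShadowsBlocks.exists_mismatchCount_concatBlocks_le (h : ShadowsBlocks X ε N)
    (hX : MapsTo shift X X) (hN : 0 < N) {b : ℕ → ℕ → α} (hb : ∀ i, b i ∈ cylNbhd X N) {k : ℕ}
    (hk : 0 < k) :
    ∃ x ∈ X, (mismatchCount x (concatBlocks N b) (k * N) : ℝ) ≤ ε * (k * N : ℕ) := by
  obtain ⟨x, hxX, hx⟩ := h.exists_dbar_concatBlocks_lt hN fun i => hb (i % k)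
  obtain ⟨m, hm⟩ := exists_window_mismatchCount_le hx (Nat.mul_pos hk hN)
  refine ⟨_, hX.iterate (m * (k * N)) hxX, ?_⟩
  rw [mismatchCount_comm]
  convert hm using 2
  refine mismatchCount_congr (fun j hj => ?_) fun _ _ => rfl
  have hjk : j / N < k := Nat.div_lt_of_lt_mul (by rwa [mul_comm])
  rw [shift_iterate_apply, concatBlocks, concatBlocks, ← mul_assoc, mul_comm _ N,
    Nat.mul_add_div hN, Nat.mul_add_mod, mul_comm m, Nat.mul_add_mod, Nat.mod_eq_of_lt hjk]

lemma ShadowsBlocks.exists_mismatchCount_le (h : ShadowsBlocks X ε N) (hne : X.Nonempty)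
    (hX : MapsTo shift X X) (hN : 0 < N) {k : ℕ} (hk : 0 < k) (x : ℕ → α) :
    ∃ z ∈ X, (mismatchCount z x (k * N) : ℝ) ≤
      N * forbiddenBlockCount X N k x + ε * (k * N : ℕ) := by
  obtain ⟨b, hb, hbx⟩ := exists_concatBlocks_mismatchCount_le hne N x
  obtain ⟨z, hz, hzb⟩ := h.exists_mismatchCount_concatBlocks_le hX hN hb hk
  refine ⟨z, hz, ?_⟩
  calc (mismatchCount z x (k * N) : ℝ)
      ≤ mismatchCount z (concatBlocks N b) (k * N) + mismatchCount (concatBlocks N b) x (k * N) :=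
        mod_cast mismatchCount_triangle _ _ _ _
    _ ≤ ε * (k * N : ℕ) + N * forbiddenBlockCount X N k x :=
        add_le_add hzb (mod_cast hbx k)
    _ = _ := add_comm _ _

lemma ShadowsBlocks.exists_measurable_mismatchCount_le [Finite α] [MeasurableSpace α]
    [MeasurableSingletonClass α] (h : ShadowsBlocks X ε N) (hne : X.Nonempty)
    (hX : MapsTo shift X X) (hN : 0 < N) {k : ℕ} (hk : 0 < k) :
    ∃ g : (ℕ → α) → ℕ → α, Measurable g ∧ ∀ x, g x ∈ X ∧
      (mismatchCount (g x) x (k * N) : ℝ) ≤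
        N * forbiddenBlockCount X N k x + ε * (k * N : ℕ) := by
  have hdep : DependsOn (fun x z => z ∈ X ∧ (mismatchCount z x (k * N) : ℝ) ≤
      N * forbiddenBlockCount X N k x + ε * (k * N : ℕ)) (Iio (k * N)) := fun x y hxy => by
    funext z
    beta_reduce
    rw [mismatchCount_congr (fun _ _ => rfl) hxy, forbiddenBlockCount_congr hxy]
  obtain ⟨g, hg, hgP⟩ :=
    exists_dependsOn_forall hdep (h.exists_mismatchCount_le hne hX hN hk)
  exact ⟨g, measurable_of_dependsOn hg, hgP⟩

end Shadowing

section Joining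

variable {α : Type} [MeasurableSpace α]

lemma dbarM_le_of_isJoining {μ ν : ProbabilityMeasure (ℕ → α)}
    {ξ : Measure ((ℕ → α) × (ℕ → α))} (hξ : IsJoining ξ μ ν) :
    dbarM μ ν ≤ (ξ {p | p.1 0 ≠ p.2 0}).toReal := by
  refine csInf_le ⟨0, ?_⟩ ⟨ξ, hξ, rfl⟩
  rintro _ ⟨_, _, rfl⟩
  exact ENNReal.toReal_nonneg

lemma orbitAverage_shift_ne_zero [DecidableEq α] [Countable α] [MeasurableSingletonClass α]
    (n : ℕ) (η : Measure ((ℕ → α) × (ℕ → α))) :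
    orbitAverage (Prod.map shift shift) n η {p | p.1 0 ≠ p.2 0} =
      (n : ℝ≥0∞)⁻¹ * ∫⁻ p, mismatchCount p.1 p.2 n ∂η := by
  have hmeas : ∀ j, MeasurableSet {p : (ℕ → α) × (ℕ → α) | p.1 j ≠ p.2 j} := fun j =>
    (measurableSet_eq_fun (by fun_prop) (by fun_prop)).compl
  rw [orbitAverage_apply (measurable_shift.prodMap measurable_shift) n η (hmeas 0)]
  simp only [mismatchCount, lintegral_count η (fun j p => p.1 j ≠ p.2 j) hmeas]
  simp [Prod.map_iterate, shift_iterate_apply]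

lemma lintegral_forbiddenBlockCount {ν : Measure (ℕ → α)} (hν : MeasurePreserving shift ν ν)
    {X : Set (ℕ → α)} {N : ℕ} (hX : MeasurableSet (cylNbhd X N)) (k : ℕ) :
    ∫⁻ x, forbiddenBlockCount X N k x ∂ν = k * ν (cylNbhd X N)ᶜ := by
  classical
  simp only [forbiddenBlockCount]
  rw [lintegral_count ν (fun i x => shift^[i * N] x ∈ (cylNbhd X N)ᶜ)
    fun i => measurable_shift.iterate _ hX.compl]
  have hpre : ∀ i, ν {x | shift^[i * N] x ∈ (cylNbhd X N)ᶜ} = ν (cylNbhd X N)ᶜ := fun i =>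
    (hν.iterate (i * N)).measure_preimage hX.compl.nullMeasurableSet
  simp only [hpre, Finset.sum_const, Finset.card_range, nsmul_eq_mul]

lemma orbitAverage_map_prodMk_le [DecidableEq α] [Countable α] [MeasurableSingletonClass α]
    {ν : Measure (ℕ → α)} [IsProbabilityMeasure ν] (hν : MeasurePreserving shift ν ν)
    {X : Set (ℕ → α)} {N k : ℕ} (hX : MeasurableSet (cylNbhd X N)) (hN : 0 < N) (hk : 0 < k)
    {ε : ℝ} {g : (ℕ → α) → ℕ → α}
    (hgX : ∀ x, (mismatchCount (g x) x (k * N) : ℝ) ≤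
      N * forbiddenBlockCount X N k x + ε * (k * N : ℕ)) :
    orbitAverage (Prod.map shift shift) (k * N) (ν.map fun x => (g x, x)) {p | p.1 0 ≠ p.2 0} ≤
      ν (cylNbhd X N)ᶜ + ENNReal.ofReal ε := by
  have hpoint : ∀ x, (mismatchCount (g x) x (k * N) : ℝ≥0∞) ≤
      N * forbiddenBlockCount X N k x + (k * N : ℕ) * ENNReal.ofReal ε := fun x => by
    calc (mismatchCount (g x) x (k * N) : ℝ≥0∞)
        = ENNReal.ofReal (mismatchCount (g x) x (k * N)) := (ENNReal.ofReal_natCast _).symm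
      _ ≤ ENNReal.ofReal (N * forbiddenBlockCount X N k x + (k * N : ℕ) * ε) :=
          ENNReal.ofReal_le_ofReal (by linarith [hgX x])
      _ ≤ ENNReal.ofReal (N * forbiddenBlockCount X N k x) + ENNReal.ofReal ((k * N : ℕ) * ε) :=
          ENNReal.ofReal_add_le
      _ = N * forbiddenBlockCount X N k x + (k * N : ℕ) * ENNReal.ofReal ε := by
          rw [ENNReal.ofReal_mul (Nat.cast_nonneg _), ENNReal.ofReal_mul (Nat.cast_nonneg _)]
          simp only [ENNReal.ofReal_natCast]
  have hkN : ((k * N : ℕ) : ℝ≥0∞) ≠ 0 := by exact_mod_cast (Nat.mul_pos hk hN).ne'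
  rw [orbitAverage_shift_ne_zero, ENNReal.inv_mul_le_iff hkN (ENNReal.natCast_ne_top _)]
  calc ∫⁻ p, mismatchCount p.1 p.2 (k * N) ∂ν.map (fun x => (g x, x))
      ≤ ∫⁻ x, mismatchCount (g x) x (k * N) ∂ν := lintegral_map_le _ _
    _ ≤ ∫⁻ x, (N * forbiddenBlockCount X N k x + (k * N : ℕ) * ENNReal.ofReal ε) ∂ν :=
        lintegral_mono hpoint
    _ = N * (k * ν (cylNbhd X N)ᶜ) + (k * N : ℕ) * ENNReal.ofReal ε := by
        rw [lintegral_add_right _ measurable_const,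
          lintegral_const_mul' _ _ (ENNReal.natCast_ne_top N), lintegral_forbiddenBlockCount hν hX,
          lintegral_const, measure_univ, mul_one]
    _ = (k * N : ℕ) * (ν (cylNbhd X N)ᶜ + ENNReal.ofReal ε) := by push_cast; ring

lemma exists_isJoining_of_map_eq_self {X : Set (ℕ → α)} (hX : MeasurableSet X)
    {ξ : ProbabilityMeasure ((ℕ → α) × (ℕ → α))} {ν : ProbabilityMeasure (ℕ → α)}
    (hξ : (ξ : Measure ((ℕ → α) × (ℕ → α))).map (Prod.map shift shift) = ξ)
    (hξX : (ξ : Measure ((ℕ → α) × (ℕ → α))) (Prod.fst ⁻¹' X)ᶜ = 0)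
    (hν : ξ.map measurable_snd.aemeasurable = ν) : ∃ μ ∈ Msigma X, IsJoining ξ μ ν := by
  refine ⟨ξ.map measurable_fst.aemeasurable, ⟨?_, ?_⟩, hξ, rfl, congrArg Subtype.val hν⟩
  · rw [invariantPM, ProbabilityMeasure.toMeasure_map]
    conv_rhs => rw [← hξ]
    rw [Measure.map_map measurable_shift measurable_fst,
      Measure.map_map measurable_fst (measurable_shift.prodMap measurable_shift)]
    rfl
  · rw [← ENNReal.coe_inj, ProbabilityMeasure.ennreal_coeFn_eq_coeFn_toMeasure,
      ProbabilityMeasure.toMeasure_map, Measure.map_apply measurable_fst hX]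
    exact (prob_compl_eq_zero_iff (measurable_fst hX)).1 hξX

variable [TopologicalSpace α] [DiscreteTopology α] [MeasurableSingletonClass α] [Finite α]

lemma exists_isJoining_of_orbitAverage_le {X : Set (ℕ → α)} (hX : IsClosed X)
    (hXσ : MapsTo shift X X) {ν : ProbabilityMeasure (ℕ → α)} (hν : invariantPM ν) {c : ℝ≥0∞}
    (h : ∀ k : ℕ, ∃ n > k, ∃ η : ProbabilityMeasure ((ℕ → α) × (ℕ → α)),
      (η : Measure ((ℕ → α) × (ℕ → α))).map Prod.snd = ν ∧
      (η : Measure ((ℕ → α) × (ℕ → α))) (Prod.fst ⁻¹' X)ᶜ = 0 ∧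
      orbitAverage (Prod.map shift shift) n (η : Measure ((ℕ → α) × (ℕ → α)))
        {p | p.1 0 ≠ p.2 0} ≤ c) :
    ∃ μ ∈ Msigma X, ∃ ξ, IsJoining ξ μ ν ∧ ξ {p | p.1 0 ≠ p.2 0} ≤ c := by
  let C : Set (ProbabilityMeasure ((ℕ → α) × (ℕ → α))) :=
    {ξ | ξ.map measurable_snd.aemeasurable = ν} ∩
      ({ξ | (ξ : Measure ((ℕ → α) × (ℕ → α))) (Prod.fst ⁻¹' X)ᶜ ≤ 0} ∩
        {ξ | (ξ : Measure ((ℕ → α) × (ℕ → α))) {p | p.1 0 ≠ p.2 0} ≤ c})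
  have hC : IsClosed C :=
    (isClosed_eq (ProbabilityMeasure.continuous_map continuous_snd) continuous_const).inter
      ((isClosed_setOf_measure_le (hX.preimage continuous_fst).isOpen_compl 0).inter
        (isClosed_setOf_measure_le isClopen_setOf_ne_zero.isOpen c))
  have hσ : Measurable (Prod.map shift shift : (ℕ → α) × (ℕ → α) → _) :=
    measurable_shift.prodMap measurable_shift
  obtain ⟨ξ, ⟨hξν, hξX, hξc⟩, hξ⟩ :=
    exists_map_eq_self_of_isClosed (continuous_shift.prodMap continuous_shift) hC fun k => by
      obtain ⟨n, hkn, η, hην, hηX, hηc⟩ := h k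
      have hn : n ≠ 0 := by omega
      refine ⟨n, hkn.le, η, ⟨_, isProbabilityMeasure_orbitAverage hσ hn η⟩, ⟨?_, ?_, hηc⟩, rfl⟩
      · refine Subtype.ext ((map_orbitAverage hσ measurable_shift measurable_snd ?_ n _).trans ?_)
        · exact fun _ => rfl
        · rw [hην]
          exact orbitAverage_eq_self ⟨measurable_shift, hν⟩ hn
      · exact (orbitAverage_compl_eq_zero hσ (measurable_fst hX.measurableSet)
          (fun _ hp => hXσ hp) n hηX).le
  obtain ⟨μ, hμ, hξμ⟩ := exists_isJoining_of_map_eq_self hX.measurableSet hξ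
    (nonpos_iff_eq_zero.1 hξX) hξν
  exact ⟨μ, hμ, ξ, hξμ, hξc⟩

lemma measure_cylNbhd_compl_eq_zero {X : Set (ℕ → α)} {μ : ProbabilityMeasure (ℕ → α)}
    (hμ : μ ∈ Msigma X) (N : ℕ) : (μ : Measure (ℕ → α)) (cylNbhd X N)ᶜ = 0 := by
  rw [prob_compl_eq_zero_iff (isClopen_cylNbhd X N).isClosed.measurableSet]
  refine le_antisymm prob_le_one (le_trans ?_ (measure_mono (subset_cylNbhd X N)))
  rw [← ProbabilityMeasure.ennreal_coeFn_eq_coeFn_toMeasure, hμ.2, ENNReal.coe_one]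

lemma ShadowsBlocks.exists_isJoining_le [DecidableEq α] [Inhabited α] {X : Set (ℕ → α)} {ε : ℝ}
    {N : ℕ} (h : ShadowsBlocks X ε N) (hX : ShiftSpace X) (hN : 0 < N)
    {ν : ProbabilityMeasure (ℕ → α)} (hν : invariantPM ν) :
    ∃ μ ∈ Msigma X, ∃ ξ, IsJoining ξ μ ν ∧
      ξ {p | p.1 0 ≠ p.2 0} ≤ (ν : Measure (ℕ → α)) (cylNbhd X N)ᶜ + ENNReal.ofReal ε := by
  obtain ⟨hne, hclosed, hσ⟩ := hX
  refine exists_isJoining_of_orbitAverage_le hclosed hσ hν fun k => ?_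
  obtain ⟨g, hg, hgX⟩ := h.exists_measurable_mismatchCount_le hne hσ hN k.succ_pos
  have hgid : Measurable fun x => (g x, x) := hg.prodMk measurable_id
  refine ⟨(k + 1) * N, by nlinarith, ν.map hgid.aemeasurable, ?_, ?_, ?_⟩
  · exact (Measure.map_map measurable_snd hgid).trans Measure.map_id
  · rw [ProbabilityMeasure.toMeasure_map,
      Measure.map_apply hgid (measurable_fst hclosed.measurableSet).compl]
    exact measure_mono_null (fun x hx => hx (hgX x).1) measure_empty
  · exact orbitAverage_map_prodMk_le ⟨measurable_shift, hν⟩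
      (isClopen_cylNbhd X N).isClosed.measurableSet hN k.succ_pos fun x => (hgX x).2

end Joining

/-- `d̄`-shadowing implies `d̄_M`-stability. -/
theorem statement1 (hA : 2 ≤ Fintype.card A) (X : Set (ℕ → A)) (hX : ShiftSpace X)
    (hshad : DbarShadowing X) : DbarMStable X := by
  intro ε hε
  obtain ⟨N, hN, hshadows : ShadowsBlocks X (ε / 2) N⟩ := hshad (ε / 2) (half_pos hε)
  refine ⟨{ν | (ν : Measure (ℕ → A)) (cylNbhd X N)ᶜ < ENNReal.ofReal (ε / 2)}, ?_, ?_, ?_⟩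
  · exact isOpen_lt (continuous_measure_of_isClopen (isClopen_cylNbhd X N).compl) continuous_const
  · intro μ hμ
    simpa [measure_cylNbhd_compl_eq_zero hμ] using hε
  · intro ν hνU hν
    obtain ⟨μ, hμ, ξ, hξ, hcost⟩ := hshadows.exists_isJoining_le hX hN hν
    refine ⟨μ, hμ, (dbarM_le_of_isJoining hξ).trans_lt (ENNReal.toReal_lt_of_lt_ofReal ?_)⟩
    calc ξ {p | p.1 0 ≠ p.2 0}
        ≤ (ν : Measure (ℕ → A)) (cylNbhd X N)ᶜ + ENNReal.ofReal (ε / 2) := hcost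
      _ < ENNReal.ofReal (ε / 2) + ENNReal.ofReal (ε / 2) :=
          ENNReal.add_lt_add_right ENNReal.ofReal_ne_top hνU
      _ = ENNReal.ofReal ε := by
          rw [← ENNReal.ofReal_add (half_pos hε).le (half_pos hε).le, add_halves]

end DbarPaper
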